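/- Let B = B(0,1) be the open unit ball in ℝ². There is no constant C such that for every function f ∈ C_0^∞(B) one has ‖∂_x² f‖_{L¹} ≤ C(‖f‖_∞ + ‖∇f‖_∞ + ‖Δf‖_{L¹}). -/

import Mathlib

open MeasureTheory Real

noncomputable section

/-- First partial derivative (with respect to the first coordinate) on `ℝ²`. -/
def pd1 (f : ℝ × ℝ → ℝ) (p : ℝ × ℝ) : ℝ := fderiv ℝ f p (1, 0)

/-- Second partial derivative (with respect to the second coordinate) on `ℝ²`. -/
def pd2 (f : ℝ × ℝ → ℝ) (p : ℝ × ℝ) : ℝ := fderiv ℝ f p (0, 1)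

/-- Euclidean magnitude of a vector in `ℝ²`. -/
def emag (v : ℝ × ℝ) : ℝ := Real.sqrt (v.1 ^ 2 + v.2 ^ 2)

/-- The open Euclidean unit ball `B(0,1)` in `ℝ²`. -/
def uball : Set (ℝ × ℝ) := {p : ℝ × ℝ | p.1 ^ 2 + p.2 ^ 2 < 1}

/-!
Three facts are incompatible with the estimate.

* Integrating along the diagonal direction first and then along a coordinate axis bounds `|f p|` by
  `‖∂₁² f‖₁ + ‖∂₂² f‖₁`, hence by `2 ‖∂₁² f‖₁ + ‖Δf‖₁`.
* Replacing `f` by the four copies `f (2 (p - c)) / 4` centred in the quarters of the square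
  carrying its support preserves the `L¹` norms of all second derivatives and at least halves
  `‖f‖_∞` and `‖∇f‖_∞`. Iterating, the estimate would hold without its lower order terms, and
  therefore so would `|f 0| ≤ K ‖Δf‖₁`.
* The latter fails because the fundamental solution is unbounded: if `u` is smooth and equal to
  `log |p|²` outside the unit disc, then `p ↦ u (a p) - u (b p) + 2 log (b / a)` has compact
  support, its value at `0` is `2 log (b / a)`, and its Laplacian has `L¹` norm at most `2 ‖Δu‖₁`.
-/

section DirectionalDerivative

variable {E : Type*} [NormedAddCommGroup E] [NormedSpace ℝ E]

/-- The derivative of `f` in the direction `v`, as a function of the point. It is the common form of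
`pd1` and `pd2`. -/
def dirDeriv (v : E) (f : E → ℝ) (x : E) : ℝ := fderiv ℝ f x v

lemma pd1_eq_dirDeriv : pd1 = dirDeriv (1, 0) := rfl

lemma pd2_eq_dirDeriv : pd2 = dirDeriv (0, 1) := rfl

lemma contDiff_dirDeriv {f : E → ℝ} {m n : WithTop ℕ∞} (hf : ContDiff ℝ n f) (hmn : m + 1 ≤ n)
    (v : E) : ContDiff ℝ m (dirDeriv v f) :=
  (hf.fderiv_right hmn).clm_apply contDiff_const

lemma tsupport_dirDeriv_subset (v : E) (f : E → ℝ) : tsupport (dirDeriv v f) ⊆ tsupport f :=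
  tsupport_fderiv_apply_subset ℝ v

lemma hasCompactSupport_dirDeriv {f : E → ℝ} (hf : HasCompactSupport f) (v : E) :
    HasCompactSupport (dirDeriv v f) :=
  hf.fderiv_apply ℝ v

lemma dirDeriv_const_mul (v : E) (a : ℝ) (f : E → ℝ) :
    dirDeriv v (fun x => a * f x) = fun x => a * dirDeriv v f x := by
  funext x
  exact DFunLike.congr_fun (congrFun (fderiv_const_smul_field a) x) v

lemma dirDeriv_sub {f g : E → ℝ} (hf : Differentiable ℝ f) (hg : Differentiable ℝ g) (v : E) :
    dirDeriv v (fun x => f x - g x) = fun x => dirDeriv v f x - dirDeriv v g x := by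
  funext x
  simp [dirDeriv, fderiv_fun_sub (hf x) (hg x)]

lemma dirDeriv_sum {ι : Type*} {f : ι → E → ℝ} (hf : ∀ i, Differentiable ℝ (f i)) (S : Finset ι)
    (v : E) : dirDeriv v (fun x => ∑ i ∈ S, f i x) = fun x => ∑ i ∈ S, dirDeriv v (f i) x := by
  funext x
  simp [dirDeriv, fderiv_fun_sum fun i _ => hf i x]

lemma dirDeriv_comp_smul (v : E) (f : E → ℝ) (a : ℝ) :
    dirDeriv v (fun x => f (a • x)) = fun x => a * dirDeriv v f (a • x) := by
  funext x
  simp [dirDeriv, fderiv_comp_smul]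

lemma dirDeriv_comp_sub (v : E) (f : E → ℝ) (c : E) :
    dirDeriv v (fun x => f (x - c)) = fun x => dirDeriv v f (x - c) := by
  funext x
  simp [dirDeriv, fderiv_comp_sub]

lemma integrable_abs_dirDeriv [MeasurableSpace E] [OpensMeasurableSpace E] {μ : Measure E}
    [IsFiniteMeasureOnCompacts μ] {f : E → ℝ} (hf : ContDiff ℝ 1 f) (hfc : HasCompactSupport f)
    (v : E) : Integrable (fun x => |dirDeriv v f x|) μ :=
  ((contDiff_dirDeriv hf (m := 0) le_rfl v).continuous.integrable_of_hasCompactSupport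
    (hasCompactSupport_dirDeriv hfc v)).abs

lemma isClosedEmbedding_line (x : E) {v : E} (hv : v ≠ 0) :
    Topology.IsClosedEmbedding fun t : ℝ => x + t • v :=
  (Homeomorph.addLeft x).isClosedEmbedding.comp (isClosedEmbedding_smul_left hv)

lemma integrable_comp_line {f : E → ℝ} (hf : Continuous f) (hfc : HasCompactSupport f) (x : E)
    {v : E} (hv : v ≠ 0) : Integrable fun t : ℝ => f (x + t • v) :=
  (hf.comp (isClosedEmbedding_line x hv).continuous).integrable_of_hasCompactSupport
    (hfc.comp_isClosedEmbedding (isClosedEmbedding_line x hv))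

lemma abs_le_integral_abs_dirDeriv {f : E → ℝ} (hf : ContDiff ℝ 1 f) (hfc : HasCompactSupport f)
    {v : E} (hv : v ≠ 0) (x : E) : |f x| ≤ ∫ t : ℝ, |dirDeriv v f (x + t • v)| := by
  have hderiv : deriv (fun t : ℝ => f (x + t • v)) = fun t => dirDeriv v f (x + t • v) := by
    funext t
    have hinner : HasDerivAt (fun t : ℝ => x + t • v) v t := by
      simpa using ((hasDerivAt_id t).smul_const v).const_add x
    exact ((hf.differentiable one_ne_zero _).hasFDerivAt.comp_hasDerivAt t hinner).deriv
  have hint : Integrable fun t : ℝ => |dirDeriv v f (x + t • v)| :=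
    (integrable_comp_line (contDiff_dirDeriv hf (m := 0) le_rfl v).continuous
      (hasCompactSupport_dirDeriv hfc v) x hv).abs
  have hcomp : HasCompactSupport fun t : ℝ => f (x + t • v) :=
    hfc.comp_isClosedEmbedding (isClosedEmbedding_line x hv)
  calc |f x| = |∫ t in Set.Iic (0 : ℝ), dirDeriv v f (x + t • v)| := by
        rw [← hderiv, hcomp.integral_Iic_deriv_eq (by fun_prop), zero_smul, add_zero]
    _ ≤ ∫ t in Set.Iic (0 : ℝ), |dirDeriv v f (x + t • v)| := abs_integral_le_integral_abs
    _ ≤ ∫ t, |dirDeriv v f (x + t • v)| :=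
        setIntegral_le_integral hint (.of_forall fun _ => abs_nonneg _)

end DirectionalDerivative

section SupBound

variable {f : ℝ × ℝ → ℝ}

lemma abs_le_integral_abs_pd1 (hf : ContDiff ℝ 1 f) (hfc : HasCompactSupport f) (p : ℝ × ℝ) :
    |f p| ≤ ∫ x, |pd1 f (x, p.2)| := by
  rw [← integral_add_left_eq_self _ p.1]
  simpa [pd1_eq_dirDeriv, Prod.add_def] using abs_le_integral_abs_dirDeriv hf hfc (v := (1, 0))
    (by simp) p

lemma abs_le_integral_abs_pd2 (hf : ContDiff ℝ 1 f) (hfc : HasCompactSupport f) (p : ℝ × ℝ) :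
    |f p| ≤ ∫ y, |pd2 f (p.1, y)| := by
  rw [← integral_add_left_eq_self _ p.2]
  simpa [pd2_eq_dirDeriv, Prod.add_def] using abs_le_integral_abs_dirDeriv hf hfc (v := (0, 1))
    (by simp) p

lemma integral_abs_diagonal_le_pd1 (hf : ContDiff ℝ 1 f) (hfc : HasCompactSupport f) (p : ℝ × ℝ) :
    ∫ t : ℝ, |f (p + t • (1, 1))| ≤ ∫ q, |pd1 f q| := by
  have hint := integrable_abs_dirDeriv (μ := volume.prod volume) hf hfc (1, 0)
  calc ∫ t : ℝ, |f (p + t • (1, 1))| ≤ ∫ t, ∫ x, |pd1 f (x, p.2 + t)| :=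
        integral_mono_of_nonneg (.of_forall fun _ => abs_nonneg _)
          (hint.integral_prod_right.comp_add_left p.2)
          (.of_forall fun t => by
            have hline := abs_le_integral_abs_pd1 hf hfc (p + t • (1, 1))
            simpa only [Prod.snd_add, Prod.smul_snd, smul_eq_mul, mul_one] using hline)
    _ = ∫ y, ∫ x, |pd1 f (x, y)| := integral_add_left_eq_self (fun y => ∫ x, |pd1 f (x, y)|) p.2
    _ = ∫ q, |pd1 f q| := (integral_prod_symm _ hint).symm

lemma integral_abs_diagonal_le_pd2 (hf : ContDiff ℝ 1 f) (hfc : HasCompactSupport f) (p : ℝ × ℝ) :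
    ∫ t : ℝ, |f (p + t • (1, 1))| ≤ ∫ q, |pd2 f q| := by
  have hint := integrable_abs_dirDeriv (μ := volume.prod volume) hf hfc (0, 1)
  calc ∫ t : ℝ, |f (p + t • (1, 1))| ≤ ∫ t, ∫ y, |pd2 f (p.1 + t, y)| :=
        integral_mono_of_nonneg (.of_forall fun _ => abs_nonneg _)
          (hint.integral_prod_left.comp_add_left p.1)
          (.of_forall fun t => by
            have hline := abs_le_integral_abs_pd2 hf hfc (p + t • (1, 1))
            simpa only [Prod.fst_add, Prod.smul_fst, smul_eq_mul, mul_one] using hline)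
    _ = ∫ x, ∫ y, |pd2 f (x, y)| := integral_add_left_eq_self (fun x => ∫ y, |pd2 f (x, y)|) p.1
    _ = ∫ q, |pd2 f q| := (integral_prod _ hint).symm

theorem abs_le_integral_abs_second_derivatives (hf : ContDiff ℝ 2 f) (hfc : HasCompactSupport f)
    (p : ℝ × ℝ) : |f p| ≤ (∫ q, |pd1 (pd1 f) q|) + ∫ q, |pd2 (pd2 f) q| := by
  have hf1 : ContDiff ℝ 1 (pd1 f) := contDiff_dirDeriv hf (by norm_num) _
  have hf2 : ContDiff ℝ 1 (pd2 f) := contDiff_dirDeriv hf (by norm_num) _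
  have hfc1 : HasCompactSupport (pd1 f) := hasCompactSupport_dirDeriv hfc _
  have hfc2 : HasCompactSupport (pd2 f) := hasCompactSupport_dirDeriv hfc _
  have hdiag : ((1, 1) : ℝ × ℝ) ≠ 0 := by simp
  have hint1 := (integrable_comp_line hf1.continuous hfc1 p hdiag).abs
  have hint2 := (integrable_comp_line hf2.continuous hfc2 p hdiag).abs
  have hsplit (q : ℝ × ℝ) : dirDeriv (1, 1) f q = pd1 f q + pd2 f q := by
    simp [dirDeriv, pd1, pd2, ← map_add]
  calc |f p| ≤ ∫ t : ℝ, |dirDeriv (1, 1) f (p + t • (1, 1))| :=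
        abs_le_integral_abs_dirDeriv (hf.of_le one_le_two) hfc hdiag p
    _ ≤ ∫ t : ℝ, (|pd1 f (p + t • (1, 1))| + |pd2 f (p + t • (1, 1))|) :=
        integral_mono_of_nonneg (.of_forall fun _ => abs_nonneg _) (hint1.add hint2)
          (.of_forall fun t => by simpa only [hsplit] using abs_add_le _ _)
    _ = (∫ t : ℝ, |pd1 f (p + t • (1, 1))|) + ∫ t : ℝ, |pd2 f (p + t • (1, 1))| :=
        integral_add hint1 hint2
    _ ≤ _ := add_le_add (integral_abs_diagonal_le_pd1 hf1 hfc1 p)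
        (integral_abs_diagonal_le_pd2 hf2 hfc2 p)

end SupBound

section Laplacian

/-- The Laplacian on `ℝ²`, with its coordinates spelled out because the sup norm of `ℝ × ℝ` does
not come from an inner product. -/
def lap (f : ℝ × ℝ → ℝ) (p : ℝ × ℝ) : ℝ := pd1 (pd1 f) p + pd2 (pd2 f) p

lemma continuous_lap {f : ℝ × ℝ → ℝ} (hf : ContDiff ℝ 2 f) : Continuous (lap f) :=
  have hone : (1 : WithTop ℕ∞) + 1 ≤ 2 := by norm_num
  (contDiff_dirDeriv (m := 0) (contDiff_dirDeriv hf hone _) le_rfl _).continuous.add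
    (contDiff_dirDeriv (m := 0) (contDiff_dirDeriv hf hone _) le_rfl _).continuous

lemma tsupport_lap_subset (f : ℝ × ℝ → ℝ) : tsupport (lap f) ⊆ tsupport f :=
  (tsupport_add _ _).trans <| Set.union_subset
    ((tsupport_dirDeriv_subset _ _).trans (tsupport_dirDeriv_subset _ _))
    ((tsupport_dirDeriv_subset _ _).trans (tsupport_dirDeriv_subset _ _))

lemma integral_abs_pd2_pd2_le {f : ℝ × ℝ → ℝ} (hf : ContDiff ℝ 2 f) (hfc : HasCompactSupport f) :
    ∫ p, |pd2 (pd2 f) p| ≤ (∫ p, |pd1 (pd1 f) p|) + ∫ p, |lap f p| := by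
  have hint1 : Integrable fun p => |pd1 (pd1 f) p| :=
    integrable_abs_dirDeriv (contDiff_dirDeriv hf (by norm_num) _)
      (hasCompactSupport_dirDeriv hfc _) _
  have hintLap : Integrable fun p => |lap f p| :=
    ((continuous_lap hf).integrable_of_hasCompactSupport
      (hfc.mono' ((subset_tsupport _).trans (tsupport_lap_subset f)))).abs
  rw [← integral_add hint1 hintLap]
  refine integral_mono_of_nonneg (.of_forall fun _ => abs_nonneg _) (hint1.add hintLap)
    (.of_forall fun p => ?_)
  calc |pd2 (pd2 f) p| = |-pd1 (pd1 f) p + lap f p| := by simp [lap]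
    _ ≤ |pd1 (pd1 f) p| + |lap f p| := (abs_add_le _ _).trans_eq (by rw [abs_neg])

lemma lap_congr {f g : ℝ × ℝ → ℝ} {p : ℝ × ℝ} (h : f =ᶠ[nhds p] g) : lap f p = lap g p := by
  have hdir {u w : ℝ × ℝ → ℝ} (huw : u =ᶠ[nhds p] w) (v : ℝ × ℝ) :
      dirDeriv v u =ᶠ[nhds p] dirDeriv v w :=
    (huw.fderiv (𝕜 := ℝ)).fun_comp (· v)
  exact congrArg₂ (· + ·) (hdir (hdir h _) _).eq_of_nhds (hdir (hdir h _) _).eq_of_nhds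

lemma lap_sub {f g : ℝ × ℝ → ℝ} (hf : ContDiff ℝ 2 f) (hg : ContDiff ℝ 2 g) :
    lap (fun p => f p - g p) = fun p => lap f p - lap g p := by
  have hdiff {u : ℝ × ℝ → ℝ} (hu : ContDiff ℝ 2 u) (v : ℝ × ℝ) : Differentiable ℝ (dirDeriv v u) :=
    (contDiff_dirDeriv (m := 1) hu (by norm_num) v).differentiable one_ne_zero
  have hf' := hf.differentiable two_ne_zero
  have hg' := hg.differentiable two_ne_zero
  funext p
  simp only [lap, pd1_eq_dirDeriv, pd2_eq_dirDeriv, dirDeriv_sub hf' hg',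
    dirDeriv_sub (hdiff hf _) (hdiff hg _)]
  ring

lemma lap_add_const (f : ℝ × ℝ → ℝ) (k : ℝ) : lap (fun p => f p + k) = lap f := by
  have hdir (v : ℝ × ℝ) : dirDeriv v (fun p => f p + k) = dirDeriv v f := by
    funext p
    simp [dirDeriv, fderiv_add_const]
  funext p
  simp only [lap, pd1_eq_dirDeriv, pd2_eq_dirDeriv, hdir]

lemma lap_comp_smul (f : ℝ × ℝ → ℝ) (a : ℝ) :
    lap (fun p => f (a • p)) = fun p => a ^ 2 * lap f (a • p) := by
  funext p
  simp only [lap, pd1_eq_dirDeriv, pd2_eq_dirDeriv, dirDeriv_comp_smul, dirDeriv_const_mul]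
  ring

lemma integral_abs_lap_comp_smul (f : ℝ × ℝ → ℝ) {a : ℝ} (ha : a ≠ 0) :
    ∫ p, |lap (fun q => f (a • q)) p| = ∫ p, |lap f p| := by
  simp only [lap_comp_smul, abs_mul, integral_const_mul]
  rw [Measure.integral_comp_smul volume fun p => |lap f p|, Module.finrank_prod,
    Module.finrank_self, smul_eq_mul, abs_inv, ← mul_assoc,
    mul_inv_cancel₀ (abs_ne_zero.2 (pow_ne_zero 2 ha)), one_mul]

end Laplacian

section RescaledCopies

variable {E : Type*} [NormedAddCommGroup E] [NormedSpace ℝ E]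

/-- The sum over `c ∈ S` of the copies of `f` shrunk by the factor `t` around `c`, with
amplitude `a`. -/
def rescaledCopies (S : Finset E) (a t : ℝ) (f : E → ℝ) (x : E) : ℝ :=
  a * ∑ c ∈ S, f (t • (x - c))

variable {S : Finset E} {a t : ℝ} {f : E → ℝ}

lemma contDiff_rescaledCopies {n : WithTop ℕ∞} (hf : ContDiff ℝ n f) :
    ContDiff ℝ n (rescaledCopies S a t f) := by
  unfold rescaledCopies
  fun_prop

lemma dirDeriv_rescaledCopies (hf : Differentiable ℝ f) (v : E) :
    dirDeriv v (rescaledCopies S a t f) = rescaledCopies S (a * t) t (dirDeriv v f) := by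
  have hcopy (c : E) : Differentiable ℝ fun x => f (t • (x - c)) := by fun_prop
  unfold rescaledCopies
  simp only [dirDeriv_const_mul, dirDeriv_sum hcopy,
    dirDeriv_comp_sub v (fun x => f (t • x)), dirDeriv_comp_smul, ← Finset.mul_sum,
    mul_assoc]

lemma tsupport_rescaledCopies_subset :
    tsupport (rescaledCopies S a t f) ⊆ ⋃ c ∈ S, (fun x => t • (x - c)) ⁻¹' tsupport f := by
  refine closure_minimal (fun x hx => ?_)
    (S.finite_toSet.isClosed_biUnion fun c _ => (isClosed_tsupport f).preimage (by fun_prop))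
  obtain ⟨c, hc, hfc⟩ := Finset.exists_ne_zero_of_sum_ne_zero (right_ne_zero_of_mul hx)
  exact Set.mem_biUnion hc (subset_tsupport f hfc)

lemma rescaledCopies_eq_single
    (hdisj : (S : Set E).PairwiseDisjoint fun c => (fun x => t • (x - c)) ⁻¹' Function.support f)
    {c x : E} (hc : c ∈ S) (hx : f (t • (x - c)) ≠ 0) :
    rescaledCopies S a t f x = a * f (t • (x - c)) := by
  refine congrArg (a * ·) (Finset.sum_eq_single_of_mem c hc fun c' hc' hne => ?_)
  by_contra hx'
  exact Set.disjoint_left.1 (hdisj hc' hc hne) hx' hx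

lemma abs_rescaledCopies
    (hdisj : (S : Set E).PairwiseDisjoint fun c => (fun x => t • (x - c)) ⁻¹' Function.support f)
    (x : E) : |rescaledCopies S a t f x| = rescaledCopies S |a| t (fun y => |f y|) x := by
  by_cases hx : ∃ c ∈ S, f (t • (x - c)) ≠ 0
  · obtain ⟨c, hc, hfc⟩ := hx
    have hdisj_abs : (S : Set E).PairwiseDisjoint
        fun c => (fun x => t • (x - c)) ⁻¹' Function.support fun y => |f y| := by
      simpa only [Function.support, ne_eq, abs_eq_zero] using hdisj
    rw [rescaledCopies_eq_single hdisj hc hfc,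
      rescaledCopies_eq_single hdisj_abs hc (abs_ne_zero.2 hfc), abs_mul]
  · push Not at hx
    simp +contextual [rescaledCopies, Finset.sum_eq_zero, hx]

lemma abs_rescaledCopies_le
    (hdisj : (S : Set E).PairwiseDisjoint fun c => (fun x => t • (x - c)) ⁻¹' Function.support f)
    {M : ℝ} (hM : ∀ y, |f y| ≤ M) (x : E) : |rescaledCopies S a t f x| ≤ |a| * M := by
  by_cases hx : ∃ c ∈ S, f (t • (x - c)) ≠ 0
  · obtain ⟨c, hc, hfc⟩ := hx
    rw [rescaledCopies_eq_single hdisj hc hfc, abs_mul]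
    gcongr
    exact hM _
  · push Not at hx
    have hM_nonneg : 0 ≤ M := (abs_nonneg _).trans (hM 0)
    simpa [rescaledCopies, Finset.sum_eq_zero hx] using by positivity

lemma integral_rescaledCopies [MeasurableSpace E] [BorelSpace E] [FiniteDimensional ℝ E]
    {μ : Measure E} [μ.IsAddHaarMeasure] (hf : Integrable f μ) (ht : t ≠ 0) :
    ∫ x, rescaledCopies S a t f x ∂μ =
      a * (S.card * (|(t ^ Module.finrank ℝ E)⁻¹| * ∫ x, f x ∂μ)) := by
  have hcopy (c : E) : ∫ x, f (t • (x - c)) ∂μ = |(t ^ Module.finrank ℝ E)⁻¹| * ∫ x, f x ∂μ := by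
    rw [integral_sub_right_eq_self (fun x => f (t • x)), Measure.integral_comp_smul, smul_eq_mul]
  simp only [rescaledCopies, integral_const_mul]
  rw [integral_finsetSum _ fun c _ => (hf.comp_smul ht).comp_sub_right c]
  simp only [hcopy, Finset.sum_const, nsmul_eq_mul]

end RescaledCopies

section Subdivision

open Metric

lemma hasCompactSupport_of_tsupport_subset_ball {E : Type*} [PseudoMetricSpace E] [ProperSpace E]
    {f : E → ℝ} {x : E} {r : ℝ} (hfs : tsupport f ⊆ ball x r) : HasCompactSupport f :=
  (isCompact_closedBall x r).of_isClosed_subset (isClosed_tsupport f)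
    (hfs.trans ball_subset_closedBall)

/-- The centres of the four quarters of the square `(-1/2, 1/2)²`, which is the ball
`ball 0 (1 / 2)` of `ℝ × ℝ`. -/
def quarterCenters : Finset (ℝ × ℝ) := {-1 / 4, 1 / 4} ×ˢ {-1 / 4, 1 / 4}

/-- The four half-size copies of `f`, with amplitude `a`, in the quarters of `(-1/2, 1/2)²`. The
amplitude `1 / 4` is the one that keeps second derivatives unchanged in size. -/
def quarterCopies (a : ℝ) (f : ℝ × ℝ → ℝ) : ℝ × ℝ → ℝ := rescaledCopies quarterCenters a 2 f

lemma card_quarterCenters : quarterCenters.card = 4 := by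
  rw [quarterCenters, Finset.card_product, Finset.card_pair (by norm_num)]

lemma mem_ball_quarter_of_two_smul_sub_mem {c x : ℝ × ℝ} (h : (2 : ℝ) • (x - c) ∈ ball 0 (1 / 2)) :
    x ∈ ball c (1 / 4) := by
  rw [mem_ball_zero_iff, norm_smul, Real.norm_ofNat] at h
  rw [mem_ball, dist_eq_norm]
  linarith

lemma disjoint_ball_quarterCenters :
    (quarterCenters : Set (ℝ × ℝ)).PairwiseDisjoint fun c => ball c (1 / 4) := by
  intro c hc c' hc' hne
  apply ball_disjoint_ball
  simp only [quarterCenters, Finset.coe_product, Set.mem_prod, Finset.coe_insert,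
    Finset.coe_singleton, Set.mem_insert_iff, Set.mem_singleton_iff] at hc hc'
  obtain ⟨x, y⟩ := c
  obtain ⟨x', y'⟩ := c'
  obtain ⟨rfl | rfl, rfl | rfl⟩ := hc <;> obtain ⟨rfl | rfl, rfl | rfl⟩ := hc' <;>
    first | exact absurd rfl hne | norm_num [Prod.dist_eq, Real.dist_eq]

lemma ball_quarter_subset {c : ℝ × ℝ} (hc : c ∈ quarterCenters) :
    ball c (1 / 4) ⊆ ball 0 (1 / 2) := by
  apply ball_subset_ball'
  obtain ⟨x, y⟩ := c
  simp only [quarterCenters, Finset.mem_product, Finset.mem_insert, Finset.mem_singleton] at hc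
  obtain ⟨rfl | rfl, rfl | rfl⟩ := hc <;> norm_num [Prod.dist_eq, Real.dist_eq]

variable {f : ℝ × ℝ → ℝ}

lemma disjoint_support_quarterCopies (hfs : tsupport f ⊆ ball 0 (1 / 2)) :
    (quarterCenters : Set (ℝ × ℝ)).PairwiseDisjoint
      fun c => (fun x => (2 : ℝ) • (x - c)) ⁻¹' Function.support f :=
  disjoint_ball_quarterCenters.mono fun _ _ hx =>
    mem_ball_quarter_of_two_smul_sub_mem (hfs (subset_tsupport f hx))

lemma tsupport_quarterCopies_subset (a : ℝ) (hfs : tsupport f ⊆ ball 0 (1 / 2)) :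
    tsupport (quarterCopies a f) ⊆ ball 0 (1 / 2) :=
  tsupport_rescaledCopies_subset.trans <| Set.iUnion₂_subset fun _ hc _ hx =>
    ball_quarter_subset hc (mem_ball_quarter_of_two_smul_sub_mem (hfs hx))

lemma dirDeriv_quarterCopies (hf : Differentiable ℝ f) (a : ℝ) (v : ℝ × ℝ) :
    dirDeriv v (quarterCopies a f) = quarterCopies (a * 2) (dirDeriv v f) :=
  dirDeriv_rescaledCopies hf v

lemma dirDeriv_dirDeriv_quarterCopies (hf : ContDiff ℝ 2 f) (v w : ℝ × ℝ) :
    dirDeriv v (dirDeriv w (quarterCopies (1 / 4) f)) =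
      quarterCopies 1 (dirDeriv v (dirDeriv w f)) := by
  have hdf : Differentiable ℝ (dirDeriv w f) :=
    (contDiff_dirDeriv (m := 1) hf (by norm_num) w).differentiable one_ne_zero
  rw [dirDeriv_quarterCopies (hf.differentiable two_ne_zero), dirDeriv_quarterCopies hdf]
  norm_num

lemma lap_quarterCopies (hf : ContDiff ℝ 2 f) :
    lap (quarterCopies (1 / 4) f) = quarterCopies 1 (lap f) := by
  funext p
  simp only [lap, pd1_eq_dirDeriv, pd2_eq_dirDeriv, dirDeriv_dirDeriv_quarterCopies hf]
  simp only [quarterCopies, rescaledCopies, lap, pd1_eq_dirDeriv, pd2_eq_dirDeriv,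
    Finset.sum_add_distrib, mul_add]

lemma integral_abs_quarterCopies (hf : Continuous f) (hfs : tsupport f ⊆ ball 0 (1 / 2)) :
    ∫ p, |quarterCopies 1 f p| = ∫ p, |f p| := by
  have hint : Integrable f := hf.integrable_of_hasCompactSupport
    (hasCompactSupport_of_tsupport_subset_ball hfs)
  simp only [quarterCopies, abs_rescaledCopies (disjoint_support_quarterCopies hfs)]
  rw [integral_rescaledCopies hint.abs two_ne_zero, card_quarterCenters, Module.finrank_prod,
    Module.finrank_self, ← mul_assoc, ← mul_assoc]
  norm_num

end Subdivision

section RemovingLowerOrderTerms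

open Metric

/-- `f` is a smooth function supported in the square `(-1/2, 1/2)²` and `M` bounds `f` and its two
first partial derivatives. -/
structure IsTestFunctionBoundedBy (f : ℝ × ℝ → ℝ) (M : ℝ) : Prop where
  contDiff : ContDiff ℝ (⊤ : ℕ∞) f
  tsupport_subset : tsupport f ⊆ ball 0 (1 / 2)
  abs_le (p : ℝ × ℝ) : |f p| ≤ M
  abs_pd1_le (p : ℝ × ℝ) : |pd1 f p| ≤ M
  abs_pd2_le (p : ℝ × ℝ) : |pd2 f p| ≤ M

namespace IsTestFunctionBoundedBy

variable {f : ℝ × ℝ → ℝ} {M : ℝ}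

lemma contDiff_two (hf : IsTestFunctionBoundedBy f M) : ContDiff ℝ 2 f :=
  contDiff_infty.1 hf.contDiff 2

lemma hasCompactSupport (hf : IsTestFunctionBoundedBy f M) : HasCompactSupport f :=
  hasCompactSupport_of_tsupport_subset_ball hf.tsupport_subset

lemma halve (hf : IsTestFunctionBoundedBy f M) :
    IsTestFunctionBoundedBy (quarterCopies (1 / 4) f) (M / 2) := by
  have hdiff : Differentiable ℝ f := hf.contDiff.differentiable (by simp)
  have hM : 0 ≤ M := (abs_nonneg _).trans (hf.abs_le 0)
  have hderiv {v : ℝ × ℝ} (hv : ∀ p, |dirDeriv v f p| ≤ M) (p : ℝ × ℝ) :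
      |dirDeriv v (quarterCopies (1 / 4) f) p| ≤ M / 2 := by
    rw [dirDeriv_quarterCopies hdiff]
    refine (abs_rescaledCopies_le (disjoint_support_quarterCopies
      ((tsupport_dirDeriv_subset v f).trans hf.tsupport_subset)) hv p).trans_eq ?_
    rw [abs_of_pos (by norm_num)]
    ring
  refine ⟨contDiff_rescaledCopies hf.contDiff,
    tsupport_quarterCopies_subset _ hf.tsupport_subset, fun p => ?_,
    hderiv hf.abs_pd1_le, hderiv hf.abs_pd2_le⟩
  refine (abs_rescaledCopies_le (disjoint_support_quarterCopies hf.tsupport_subset) hf.abs_le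
    p).trans ?_
  rw [abs_of_pos (by norm_num)]
  linarith

lemma integral_abs_pd1_pd1_quarterCopies (hf : IsTestFunctionBoundedBy f M) :
    ∫ p, |pd1 (pd1 (quarterCopies (1 / 4) f)) p| = ∫ p, |pd1 (pd1 f) p| := by
  have hcont : Continuous (pd1 (pd1 f)) := (contDiff_dirDeriv (m := 0)
    (contDiff_dirDeriv (m := 1) hf.contDiff_two (by norm_num) _) le_rfl _).continuous
  rw [pd1_eq_dirDeriv, dirDeriv_dirDeriv_quarterCopies hf.contDiff_two]
  exact integral_abs_quarterCopies hcont ((tsupport_dirDeriv_subset _ _).trans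
    ((tsupport_dirDeriv_subset _ _).trans hf.tsupport_subset))

lemma integral_abs_lap_quarterCopies (hf : IsTestFunctionBoundedBy f M) :
    ∫ p, |lap (quarterCopies (1 / 4) f) p| = ∫ p, |lap f p| := by
  rw [lap_quarterCopies hf.contDiff_two]
  exact integral_abs_quarterCopies (continuous_lap hf.contDiff_two)
    ((tsupport_lap_subset f).trans hf.tsupport_subset)

end IsTestFunctionBoundedBy

lemma integral_abs_pd1_pd1_le_of_estimate {C : ℝ}
    (hC : ∀ f M, IsTestFunctionBoundedBy f M →
      ∫ p, |pd1 (pd1 f) p| ≤ C * (M + ∫ p, |lap f p|))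
    {f : ℝ × ℝ → ℝ} {M : ℝ} (hf : IsTestFunctionBoundedBy f M) :
    ∫ p, |pd1 (pd1 f) p| ≤ C * ∫ p, |lap f p| := by
  have hiter (n : ℕ) : ∀ f M, IsTestFunctionBoundedBy f M →
      ∫ p, |pd1 (pd1 f) p| ≤ C * (M * (1 / 2) ^ n + ∫ p, |lap f p|) := by
    induction n with
    | zero => simpa using hC
    | succ n ih =>
      intro f M hf
      have := ih _ _ hf.halve
      rw [hf.integral_abs_pd1_pd1_quarterCopies, hf.integral_abs_lap_quarterCopies] at this
      exact this.trans_eq (by ring)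
  have hlim : Filter.Tendsto (fun n : ℕ => C * (M * (1 / 2) ^ n + ∫ p, |lap f p|)) Filter.atTop
      (nhds (C * (M * 0 + ∫ p, |lap f p|))) :=
    (((tendsto_pow_atTop_nhds_zero_of_lt_one (by norm_num) (by norm_num)).const_mul
      M).add_const _).const_mul C
  simpa using ge_of_tendsto' hlim fun n => hiter n f M hf

end RemovingLowerOrderTerms

section LogSpike

open Metric

/-- The square of the Euclidean norm on `ℝ²` (the norm of `ℝ × ℝ` is the sup norm). -/
def normSq (p : ℝ × ℝ) : ℝ := p.1 ^ 2 + p.2 ^ 2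

/-- A smooth function on `ℝ²` equal to `log |p|²`, a multiple of the fundamental solution of the
Laplacian, outside the unit disc. The correction inside keeps the argument of `log` positive. -/
def smoothLog (p : ℝ × ℝ) : ℝ := log (normSq p + smoothTransition (1 - normSq p))

/-- The difference of two dilates of `smoothLog`, shifted so as to vanish outside a small disc; it
has height `2 L` at the origin. -/
def logSpike (L : ℝ) (p : ℝ × ℝ) : ℝ :=
  smoothLog ((4 : ℝ) • p) - smoothLog ((4 * exp L) • p) + 2 * L

lemma normSq_smul (a : ℝ) (p : ℝ × ℝ) : normSq (a • p) = a ^ 2 * normSq p := by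
  simp only [normSq, Prod.smul_fst, Prod.smul_snd, smul_eq_mul]
  ring

lemma sq_norm_le_normSq (p : ℝ × ℝ) : ‖p‖ ^ 2 ≤ normSq p := by
  have h1 := sq_nonneg p.1
  have h2 := sq_nonneg p.2
  rcases max_choice ‖p.1‖ ‖p.2‖ with h | h <;>
    rw [Prod.norm_def, h, Real.norm_eq_abs, sq_abs, normSq] <;> linarith

lemma normSq_add_smoothTransition_pos (p : ℝ × ℝ) :
    0 < normSq p + smoothTransition (1 - normSq p) := by
  rcases lt_or_ge (normSq p) 1 with h | h
  · exact add_pos_of_nonneg_of_pos ((sq_nonneg _).trans (sq_norm_le_normSq p))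
      (smoothTransition.pos_of_pos (sub_pos.2 h))
  · exact add_pos_of_pos_of_nonneg (one_pos.trans_le h) (smoothTransition.nonneg _)

lemma contDiff_normSq {n : WithTop ℕ∞} : ContDiff ℝ n normSq := by
  unfold normSq
  fun_prop

lemma contDiff_smoothLog {n : ℕ∞} : ContDiff ℝ n smoothLog :=
  (contDiff_normSq.add (smoothTransition.contDiff.comp (contDiff_const.sub contDiff_normSq))).log
    fun p => (normSq_add_smoothTransition_pos p).ne'

lemma smoothLog_of_one_le {p : ℝ × ℝ} (hp : 1 ≤ normSq p) : smoothLog p = log (normSq p) := by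
  rw [smoothLog, smoothTransition.zero_of_nonpos (sub_nonpos.2 hp), add_zero]

lemma hasFDerivAt_normSq (p : ℝ × ℝ) :
    HasFDerivAt normSq ((2 * p.1) • ContinuousLinearMap.fst ℝ ℝ ℝ +
      (2 * p.2) • ContinuousLinearMap.snd ℝ ℝ ℝ) p := by
  have hfst := (hasFDerivAt_fst (𝕜 := ℝ) (p := p)).pow 2
  have hsnd := (hasFDerivAt_snd (𝕜 := ℝ) (p := p)).pow 2
  refine (hfst.fun_add hsnd).congr_fderiv ?_
  simp

lemma dirDeriv_log_normSq (v : ℝ × ℝ) {p : ℝ × ℝ} (hp : normSq p ≠ 0) :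
    dirDeriv v (fun q => log (normSq q)) p = 2 * (p.1 * v.1 + p.2 * v.2) / normSq p := by
  simp only [dirDeriv, ((hasFDerivAt_normSq p).log hp).fderiv, smul_apply,
    add_apply, ContinuousLinearMap.coe_fst', ContinuousLinearMap.coe_snd',
    smul_eq_mul]
  ring

lemma dirDeriv_dirDeriv_log_normSq (v : ℝ × ℝ) {p : ℝ × ℝ} (hp : normSq p ≠ 0) :
    dirDeriv v (dirDeriv v fun q => log (normSq q)) p =
      (2 * normSq v * normSq p - (2 * (p.1 * v.1 + p.2 * v.2)) ^ 2) / normSq p ^ 2 := by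
  have hnear : dirDeriv v (fun q => log (normSq q)) =ᶠ[nhds p]
      fun q => 2 * (q.1 * v.1 + q.2 * v.2) * (normSq q)⁻¹ :=
    ((contDiff_normSq (n := 0)).continuous.continuousAt.eventually_ne hp).mono fun q hq =>
      (dirDeriv_log_normSq v hq).trans (div_eq_mul_inv _ _)
  have hnum : HasFDerivAt (fun q : ℝ × ℝ => 2 * (q.1 * v.1 + q.2 * v.2))
      ((2 : ℝ) • (v.1 • ContinuousLinearMap.fst ℝ ℝ ℝ + v.2 • ContinuousLinearMap.snd ℝ ℝ ℝ)) p :=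
    ((hasFDerivAt_fst.mul_const v.1).add (hasFDerivAt_snd.mul_const v.2)).const_mul 2
  have hinv : HasFDerivAt (fun q => (normSq q)⁻¹) _ p :=
    (hasDerivAt_inv hp).comp_hasFDerivAt p (hasFDerivAt_normSq p)
  rw [dirDeriv, hnear.fderiv_eq, (hnum.fun_mul hinv).fderiv]
  simp only [add_apply, smul_apply, ContinuousLinearMap.coe_fst', ContinuousLinearMap.coe_snd',
    smul_eq_mul]
  rw [show normSq v = v.1 ^ 2 + v.2 ^ 2 from rfl]
  field_simp
  ring

lemma lap_log_normSq {p : ℝ × ℝ} (hp : normSq p ≠ 0) : lap (fun q => log (normSq q)) p = 0 := by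
  simp only [lap, pd1_eq_dirDeriv, pd2_eq_dirDeriv, dirDeriv_dirDeriv_log_normSq _ hp, ← add_div]
  simp only [normSq]
  ring

lemma lap_smoothLog_eq_zero {p : ℝ × ℝ} (hp : 1 < normSq p) : lap smoothLog p = 0 := by
  have hnear : smoothLog =ᶠ[nhds p] fun q => log (normSq q) :=
    ((contDiff_normSq (n := 0)).continuous.continuousAt.eventually (lt_mem_nhds hp)).mono
      fun q hq => smoothLog_of_one_le hq.le
  rw [lap_congr hnear, lap_log_normSq (one_pos.trans hp).ne']

lemma integrable_lap_smoothLog : Integrable (lap smoothLog) := by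
  refine (continuous_lap contDiff_smoothLog).integrable_of_hasCompactSupport
    (.intro (isCompact_closedBall 0 1) fun p hp => lap_smoothLog_eq_zero ?_)
  rw [mem_closedBall_zero_iff, not_le] at hp
  exact (one_lt_pow₀ hp two_ne_zero).trans_le (sq_norm_le_normSq p)

lemma contDiff_logSpike (L : ℝ) {n : ℕ∞} : ContDiff ℝ n (logSpike L) :=
  ((contDiff_smoothLog.comp (contDiff_const_smul _)).sub
    (contDiff_smoothLog.comp (contDiff_const_smul _))).add contDiff_const

lemma logSpike_zero (L : ℝ) : logSpike L 0 = 2 * L := by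
  simp [logSpike]

lemma logSpike_eq_zero {L : ℝ} (hL : 0 ≤ L) {p : ℝ × ℝ} (hp : 1 / 4 ≤ ‖p‖) : logSpike L p = 0 := by
  have hinner : 1 ≤ normSq ((4 : ℝ) • p) := by
    refine le_trans ?_ (sq_norm_le_normSq _)
    rw [norm_smul, Real.norm_ofNat]
    exact one_le_pow₀ (by linarith)
  have hscale : normSq ((4 * exp L) • p) = exp L ^ 2 * normSq ((4 : ℝ) • p) := by
    rw [normSq_smul, normSq_smul]
    ring
  have houter : 1 ≤ normSq ((4 * exp L) • p) :=
    hscale ▸ one_le_mul_of_one_le_of_one_le (one_le_pow₀ (one_le_exp hL)) hinner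
  rw [logSpike, smoothLog_of_one_le hinner, smoothLog_of_one_le houter, hscale,
    log_mul (by positivity) (by positivity), log_pow, log_exp]
  push_cast
  ring

lemma tsupport_logSpike_subset {L : ℝ} (hL : 0 ≤ L) :
    tsupport (logSpike L) ⊆ ball 0 (1 / 2) := by
  refine (closure_minimal (fun p hp => ?_) isClosed_closedBall).trans
    (closedBall_subset_ball (show (1 / 4 : ℝ) < 1 / 2 by norm_num))
  rw [mem_closedBall_zero_iff]
  exact le_of_not_ge fun h => hp (logSpike_eq_zero hL h)

lemma integral_abs_lap_logSpike_le (L : ℝ) :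
    ∫ p, |lap (logSpike L) p| ≤ 2 * ∫ p, |lap smoothLog p| := by
  have hsmooth (a : ℝ) : ContDiff ℝ 2 fun p : ℝ × ℝ => smoothLog (a • p) :=
    contDiff_smoothLog.comp (contDiff_const_smul a)
  have hint {a : ℝ} (ha : a ≠ 0) : Integrable fun p => |lap (fun q => smoothLog (a • q)) p| := by
    rw [lap_comp_smul]
    exact ((integrable_lap_smoothLog.comp_smul ha).const_mul _).abs
  have hL : 4 * exp L ≠ 0 := by positivity
  have hlap : lap (logSpike L) = fun p => lap (fun q => smoothLog ((4 : ℝ) • q)) p -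
      lap (fun q => smoothLog ((4 * exp L) • q)) p :=
    (lap_add_const _ _).trans (lap_sub (hsmooth _) (hsmooth _))
  calc ∫ p, |lap (logSpike L) p|
      ≤ ∫ p, (|lap (fun q => smoothLog ((4 : ℝ) • q)) p| +
          |lap (fun q => smoothLog ((4 * exp L) • q)) p|) :=
        integral_mono_of_nonneg (.of_forall fun _ => abs_nonneg _)
          ((hint four_ne_zero).add (hint hL))
          (.of_forall fun p => by simpa only [hlap] using abs_sub _ _)
    _ = 2 * ∫ p, |lap smoothLog p| := by
        rw [integral_add (hint four_ne_zero) (hint hL),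
          integral_abs_lap_comp_smul _ four_ne_zero, integral_abs_lap_comp_smul _ hL, two_mul]

end LogSpike

section Comparison

open Metric

lemma emag_le_abs_add_abs (v : ℝ × ℝ) : emag v ≤ |v.1| + |v.2| :=
  Real.sqrt_le_iff.2 ⟨by positivity, by
    nlinarith [mul_nonneg (abs_nonneg v.1) (abs_nonneg v.2), sq_abs v.1, sq_abs v.2]⟩

lemma ball_half_subset_uball : ball (0 : ℝ × ℝ) (1 / 2) ⊆ uball := by
  intro p hp
  rw [mem_ball_zero_iff, Prod.norm_def, max_lt_iff] at hp
  have h1 : p.1 ^ 2 < (1 / 2) ^ 2 := sq_lt_sq' (abs_lt.1 hp.1).1 (abs_lt.1 hp.1).2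
  have h2 : p.2 ^ 2 < (1 / 2) ^ 2 := sq_lt_sq' (abs_lt.1 hp.2).1 (abs_lt.1 hp.2).2
  rw [uball, Set.mem_ofPred_eq]
  linarith

lemma exists_isTestFunctionBoundedBy {f : ℝ × ℝ → ℝ} (hf : ContDiff ℝ (⊤ : ℕ∞) f)
    (hfs : tsupport f ⊆ ball 0 (1 / 2)) : ∃ M, IsTestFunctionBoundedBy f M := by
  have hfc : HasCompactSupport f := hasCompactSupport_of_tsupport_subset_ball hfs
  have hderiv (v : ℝ × ℝ) : ∃ M, ∀ p, |dirDeriv v f p| ≤ M :=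
    (hasCompactSupport_dirDeriv hfc v).exists_bound_of_continuous
      (contDiff_dirDeriv (m := 0) hf (by simp) v).continuous
  obtain ⟨M₀, hM₀⟩ := hfc.exists_bound_of_continuous hf.continuous
  obtain ⟨M₁, hM₁⟩ := hderiv (1, 0)
  obtain ⟨M₂, hM₂⟩ := hderiv (0, 1)
  exact ⟨max M₀ (max M₁ M₂), hf, hfs, fun p => (hM₀ p).trans (by simp),
    fun p => (hM₁ p).trans (by simp), fun p => (hM₂ p).trans (by simp)⟩

lemma IsTestFunctionBoundedBy.iSup_add_iSup_le {f : ℝ × ℝ → ℝ} {M : ℝ}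
    (hf : IsTestFunctionBoundedBy f M) :
    (⨆ p, |f p|) + (⨆ p, emag (pd1 f p, pd2 f p)) ≤ 3 * M := by
  have hgrad : ⨆ p, emag (pd1 f p, pd2 f p) ≤ M + M := ciSup_le fun p =>
    (emag_le_abs_add_abs _).trans (add_le_add (hf.abs_pd1_le p) (hf.abs_pd2_le p))
  linarith [ciSup_le hf.abs_le]

lemma abs_le_of_second_derivative_estimate {C : ℝ}
    (hC : ∀ f M, IsTestFunctionBoundedBy f M →
      ∫ p, |pd1 (pd1 f) p| ≤ C * (M + ∫ p, |lap f p|))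
    {f : ℝ × ℝ → ℝ} {M : ℝ} (hf : IsTestFunctionBoundedBy f M) (p : ℝ × ℝ) :
    |f p| ≤ (2 * C + 1) * ∫ q, |lap f q| := by
  have hsup := abs_le_integral_abs_second_derivatives hf.contDiff_two hf.hasCompactSupport p
  have hpd2 := integral_abs_pd2_pd2_le hf.contDiff_two hf.hasCompactSupport
  have hpd1 := integral_abs_pd1_pd1_le_of_estimate hC hf
  linarith

theorem not_second_derivative_estimate (C : ℝ) :
    ¬ ∀ f M, IsTestFunctionBoundedBy f M →
      ∫ p, |pd1 (pd1 f) p| ≤ C * (M + ∫ p, |lap f p|) := by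
  intro hC
  set K := ∫ p, |lap smoothLog p|
  have hK : 0 ≤ K := integral_nonneg fun _ => abs_nonneg _
  set L := |2 * C + 1| * K + 1
  have hL : 0 ≤ L := add_nonneg (mul_nonneg (abs_nonneg _) hK) zero_le_one
  obtain ⟨M, hM⟩ :=
    exists_isTestFunctionBoundedBy (contDiff_logSpike L) (tsupport_logSpike_subset hL)
  have hheight : 2 * L ≤ |2 * C + 1| * (2 * K) :=
    calc 2 * L = |logSpike L 0| := by rw [logSpike_zero, abs_of_nonneg (by positivity)]
      _ ≤ (2 * C + 1) * ∫ p, |lap (logSpike L) p| := abs_le_of_second_derivative_estimate hC hM 0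
      _ ≤ |2 * C + 1| * (2 * K) := mul_le_mul (le_abs_self _) (integral_abs_lap_logSpike_le L)
          (integral_nonneg fun _ => abs_nonneg _) (abs_nonneg _)
  linarith

end Comparison

/-- There is no constant `C` such that
`‖∂_x² f‖_{L¹} ≤ C (‖f‖_∞ + ‖∇f‖_∞ + ‖Δf‖_{L¹})` for all `f ∈ C_0^∞(B(0,1))`. -/
theorem no_L1_second_derivative_estimate :
    ¬ ∃ C : ℝ, ∀ f : ℝ × ℝ → ℝ,
        ContDiff ℝ (⊤ : ℕ∞) f → HasCompactSupport f → tsupport f ⊆ uball →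
        (∫ p, |pd1 (pd1 f) p|) ≤
          C * ((⨆ p, |f p|) + (⨆ p, emag (pd1 f p, pd2 f p)) +
            ∫ p, |pd1 (pd1 f) p + pd2 (pd2 f) p|) := by
  rintro ⟨C, hC⟩
  refine not_second_derivative_estimate (|C| * 3) fun f M hf => ?_
  have hlap : 0 ≤ ∫ p, |lap f p| := integral_nonneg fun _ => abs_nonneg _
  have hnorms : 0 ≤ (⨆ p, |f p|) + ⨆ p, emag (pd1 f p, pd2 f p) :=
    add_nonneg (iSup_nonneg fun _ => abs_nonneg _) (iSup_nonneg fun _ => sqrt_nonneg _)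
  calc ∫ p, |pd1 (pd1 f) p|
      ≤ C * ((⨆ p, |f p|) + (⨆ p, emag (pd1 f p, pd2 f p)) + ∫ p, |lap f p|) :=
        hC f hf.contDiff hf.hasCompactSupport (hf.tsupport_subset.trans ball_half_subset_uball)
    _ ≤ |C| * (3 * M + ∫ p, |lap f p|) :=
        mul_le_mul (le_abs_self C) (add_le_add_left hf.iSup_add_iSup_le _)
          (add_nonneg hnorms hlap) (abs_nonneg C)
    _ ≤ |C| * 3 * (M + ∫ p, |lap f p|) := by nlinarith [mul_nonneg (abs_nonneg C) hlap]
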